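/- arXiv:2307.02366 — 4 statements merged into one kernel-verified Lean document; each statement's English description precedes it below -/
import Mathlib

section
/- Every periodic sequence f in Z_m admits a unique decomposition f = f_I + f_N where f_I is idempotent and f_N is nilpotent; moreover τ(f) = lcm(τ(f_I), τ(f_N)). -/
/-- The shift operator `θ`: `θ f n = f (n+1)`. -/
def shiftSeq {M : ℕ} (f : ℕ → ZMod M) : ℕ → ZMod M := fun n => f (n + 1)

/-- The difference operator `Δ = θ - id`: `Δ f n = f (n+1) - f n`. -/
def deltaSeq {M : ℕ} (f : ℕ → ZMod M) : ℕ → ZMod M := fun n => f (n + 1) - f n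

/-- A sequence is periodic if `θ^j f = f` for some `j ≥ 1`. -/
def IsPeriodicSeq {M : ℕ} (f : ℕ → ZMod M) : Prop := ∃ j, 1 ≤ j ∧ Function.Periodic f j

/-- The period `τ(f)`: the least `j ≥ 1` with `θ^j f = f`. -/
noncomputable def perSeq {M : ℕ} (f : ℕ → ZMod M) : ℕ :=
  sInf {j | 1 ≤ j ∧ Function.Periodic f j}

/-- The trace `tr f = ∑_{i=0}^{τ(f)-1} f i`. -/
noncomputable def trSeq {M : ℕ} (f : ℕ → ZMod M) : ZMod M :=
  ∑ i ∈ Finset.range (perSeq f), f i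

/-- The sum operator `Σ`: `Σf(0) = 0`, `Σf(n) = f(n-1) + Σf(n-1)`. -/
def sigmaSeq {M : ℕ} (f : ℕ → ZMod M) : ℕ → ZMod M
  | 0 => 0
  | n + 1 => f n + sigmaSeq f n

/-- A sequence is nilpotent if `Δ^η f = 0` for some `η ≥ 1`. -/
def IsNilpotentSeq {M : ℕ} (f : ℕ → ZMod M) : Prop := ∃ η, 1 ≤ η ∧ deltaSeq^[η] f = 0

/-- A sequence is idempotent if `Δ^η f = f` for some `η ≥ 1`. -/
def IsIdempotentSeq {M : ℕ} (f : ℕ → ZMod M) : Prop := ∃ η, 1 ≤ η ∧ deltaSeq^[η] f = f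

/-- The nilpotency index: the least `η ≥ 1` with `Δ^η f = 0`. -/
noncomputable def nilIndex {M : ℕ} (f : ℕ → ZMod M) : ℕ :=
  sInf {η | 1 ≤ η ∧ deltaSeq^[η] f = 0}

/-- The idempotency index: the least `η ≥ 1` with `Δ^η f = f`. -/
noncomputable def idemIndex {M : ℕ} (f : ℕ → ZMod M) : ℕ :=
  sInf {η | 1 ≤ η ∧ deltaSeq^[η] f = f}

/-- The `p`-adic valuation on `ZMod M`, with `ν(0) = ∞`. -/
noncomputable def nuVal (p : ℕ) {M : ℕ} (a : ZMod M) : ℕ∞ :=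
  if a = 0 then ⊤ else (padicValNat p a.val : ℕ∞)

/-- `Double(f, q^t)`: repeat `q` times each successive `q^t`-subsequence of `f`. -/
def DoubleSeq {M : ℕ} (f : ℕ → ZMod M) (q t : ℕ) : ℕ → ZMod M :=
  fun n => f ((n / q ^ (t + 1)) * q ^ t + n % q ^ t)

/-- `Alt(f, q^t)`: alternate `(q-1)q^t` zeros with the successive `q^t`-subsequences of `f`. -/
def AltSeq {M : ℕ} (f : ℕ → ZMod M) (q t : ℕ) : ℕ → ZMod M :=
  fun n => if (n / q ^ t) % q = q - 1 then f ((n / q ^ (t + 1)) * q ^ t + n % q ^ t) else 0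

/-- The binomial sequence `bin_s(n) = C(n,s) mod p^ℓ`. -/
def binSeq (p l : ℕ) (s : ℕ) : ℕ → ZMod (p ^ l) := fun n => (n.choose s : ZMod (p ^ l))

/-- `f ≡_ν g`: zeros coincide, and valuations of nonzero values coincide. -/
def nuEquiv (p : ℕ) {M : ℕ} (f g : ℕ → ZMod M) : Prop :=
  ∀ n, (f n = 0 ↔ g n = 0) ∧ (f n ≠ 0 → padicValNat p (f n).val = padicValNat p (g n).val)

/-- `Π_i(f)`: number of entries of valuation `i` in one period of `f`. -/
noncomputable def PiCount (p : ℕ) {M : ℕ} (i : ℕ) (f : ℕ → ZMod M) : ℕ :=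
  ((Finset.range (perSeq f)).filter fun x => f x ≠ 0 ∧ padicValNat p (f x).val = i).card

/-- `Z(f)`: number of zero entries in one period of `f`. -/
noncomputable def ZCount {M : ℕ} (f : ℕ → ZMod M) : ℕ :=
  ((Finset.range (perSeq f)).filter fun x => f x = 0).card

/-- The `j`-th base-`p` digit of `x`. -/
def dig (p x j : ℕ) : ℕ := x / p ^ j % p

/-!
Periodicity, idempotency and nilpotency are dynamical properties of the endomorphisms `θ` and `Δ`:
idempotent sequences are the periodic points of `Δ`, nilpotent ones form its generalized
eigenspace for `0`. Since `Δ` is injective on its periodic points, these two submodules meet only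
in `0`. Their sum contains every `f` with finite `Δ`-orbit: some `N ≥ 1` satisfies
`Δ^(2N) f = Δ^N f`, so that `f = Δ^N f + (f - Δ^N f)` is a decomposition. A periodic `f` has finite
`Δ`-orbit because `Δ` preserves the finite set of sequences `g` with `θ^τ(f) g = g`. Finally `θ`
commutes with `Δ`, hence preserves both submodules, so by uniqueness `θ^c` fixes `f` iff it fixes
both components; comparing all `c` gives the formula for the periods.
-/

open Function (IsPeriodicPt periodicPts minimalPeriod isPeriodicPt_iff_minimalPeriod_dvd)
open Set (MapsTo)
open Module.End (mem_maxGenEigenspace mapsTo_maxGenEigenspace_of_comm)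
open fwdDiff_aux (fwdDiffₗ shiftₗ shiftₗ_pow_apply)

section Iterate

variable {α : Type*} {g : α → α} {x : α}

theorem exists_pos_isPeriodicPt_iterate (h : (Set.range fun n ↦ g^[n] x).Finite) :
    ∃ N > 0, IsPeriodicPt g N (g^[N] x) := by
  obtain ⟨a, b, hab, heq⟩ := h.exists_lt_map_eq_of_forall_mem (f := fun n ↦ g^[n] x)
    (Set.mem_range_self ·)
  have hd : 0 < b - a := Nat.sub_pos_of_lt hab
  have hper : IsPeriodicPt g (b - a) (g^[a] x) := by
    rw [IsPeriodicPt, Function.IsFixedPt, ← Function.iterate_add_apply, Nat.sub_add_cancel hab.le]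
    exact heq.symm
  have hle : a ≤ (b - a) * (a + 1) := a.le_succ.trans (Nat.le_mul_of_pos_left _ hd)
  refine ⟨(b - a) * (a + 1), Nat.mul_pos hd a.succ_pos, IsPeriodicPt.mul_const ?_ _⟩
  rw [← Nat.sub_add_cancel hle, Function.iterate_add_apply]
  exact hper.apply_iterate _

end Iterate

section DisjointSubmodules

variable {R M : Type*} [Ring R] [AddCommGroup M] [Module R M] {H K : Submodule R M}

theorem add_eq_add_iff_of_disjoint (hHK : Disjoint H K) {y y' z z' : M} (hy : y ∈ H) (hy' : y' ∈ H)
    (hz : z ∈ K) (hz' : z' ∈ K) : y + z = y' + z' ↔ y = y' ∧ z = z' := by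
  refine ⟨fun h ↦ ?_, fun ⟨h₁, h₂⟩ ↦ h₁ ▸ h₂ ▸ rfl⟩
  have hdiff : y - y' = z' - z := sub_eq_sub_iff_add_eq_add.2 (h.trans (add_comm _ _))
  have hyy' : y = y' := sub_eq_zero.1 <| Submodule.disjoint_def.1 hHK _ (H.sub_mem hy hy')
    (hdiff ▸ K.sub_mem hz' hz)
  exact ⟨hyy', add_left_cancel (hyy' ▸ h)⟩

variable {S : Module.End R M} {y z : M}

theorem isPeriodicPt_add_iff_of_disjoint (hHK : Disjoint H K) (hSH : MapsTo S H H)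
    (hSK : MapsTo S K K) (hy : y ∈ H) (hz : z ∈ K) {c : ℕ} :
    IsPeriodicPt S c (y + z) ↔ IsPeriodicPt S c y ∧ IsPeriodicPt S c z := by
  simp only [IsPeriodicPt, Function.IsFixedPt, iterate_map_add]
  exact add_eq_add_iff_of_disjoint hHK (hSH.iterate c hy) hy (hSK.iterate c hz) hz

theorem minimalPeriod_add_of_disjoint (hHK : Disjoint H K) (hSH : MapsTo S H H)
    (hSK : MapsTo S K K) (hy : y ∈ H) (hz : z ∈ K) :
    minimalPeriod S (y + z) = (minimalPeriod S y).lcm (minimalPeriod S z) := by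
  refine Nat.dvd_right_iff_eq.1 fun c ↦ ?_
  simp only [Nat.lcm_dvd_iff, ← isPeriodicPt_iff_minimalPeriod_dvd]
  exact isPeriodicPt_add_iff_of_disjoint hHK hSH hSK hy hz

end DisjointSubmodules

section PeriodicSubmodule

variable {R M : Type*} [Ring R] [AddCommGroup M] [Module R M]

/-- The submodule of periodic points of a linear endomorphism `T`. For `T = Δ` its elements are
the idempotent sequences. -/
def periodicSubmodule (T : Module.End R M) : Submodule R M where
  carrier := periodicPts T
  zero_mem' := ⟨1, one_pos, iterate_map_zero T 1⟩
  add_mem' := by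
    rintro x y ⟨a, ha, hx⟩ ⟨b, hb, hy⟩
    refine ⟨a * b, Nat.mul_pos ha hb, ?_⟩
    rw [IsPeriodicPt, Function.IsFixedPt, iterate_map_add, hx.mul_const b, hy.const_mul a]
  smul_mem' := by
    rintro r x ⟨a, ha, hx⟩
    refine ⟨a, ha, ?_⟩
    rw [IsPeriodicPt, Function.IsFixedPt, ← Module.End.pow_apply, map_smul, Module.End.pow_apply,
      hx]

theorem mapsTo_periodicSubmodule_of_commute {S T : Module.End R M} (h : Commute T S) :
    MapsTo S (periodicSubmodule T) (periodicSubmodule T) :=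
  Function.Semiconj.mapsTo_periodicPts fun x ↦ (LinearMap.congr_fun h.eq x).symm

end PeriodicSubmodule

section FittingDecomposition

variable {R M : Type*} [CommRing R] [AddCommGroup M] [Module R M] {T : Module.End R M} {x : M}

theorem mem_maxGenEigenspace_zero_iff : x ∈ T.maxGenEigenspace 0 ↔ ∃ n, T^[n] x = 0 := by
  simp only [mem_maxGenEigenspace, zero_smul, sub_zero, Module.End.pow_apply]

variable (T) in
theorem disjoint_periodicSubmodule_maxGenEigenspace_zero :
    Disjoint (periodicSubmodule T) (T.maxGenEigenspace 0) := by
  refine Submodule.disjoint_def.2 fun x ⟨a, ha, hx⟩ hnil ↦ ?_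
  obtain ⟨n, hn⟩ := mem_maxGenEigenspace_zero_iff.1 hnil
  have hzero : IsPeriodicPt T a 0 := iterate_map_zero T a
  exact (hx.iterate n).eq_of_apply_eq_same (hzero.iterate n) ha
    (hn.trans (iterate_map_zero T n).symm)

theorem mem_periodicSubmodule_sup_maxGenEigenspace_zero (h : (Set.range fun n ↦ T^[n] x).Finite) :
    x ∈ periodicSubmodule T ⊔ T.maxGenEigenspace 0 := by
  obtain ⟨N, hN, hper⟩ := exists_pos_isPeriodicPt_iterate h
  have hnil : T^[N] (x - T^[N] x) = 0 := by rw [iterate_map_sub, hper, sub_self]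
  exact Submodule.mem_sup.2 ⟨T^[N] x, ⟨N, hN, hper⟩, x - T^[N] x,
    mem_maxGenEigenspace_zero_iff.2 ⟨N, hnil⟩, add_sub_cancel _ _⟩

end FittingDecomposition

section Shift

variable {G : Type*} [AddCommGroup G]

theorem commute_fwdDiffₗ_shiftₗ {M : Type*} [AddCommMonoid M] (h : M) :
    Commute (fwdDiffₗ M G h) (shiftₗ M G h) :=
  (Commute.refl _).add_right (Commute.one_right _)

theorem isPeriodicPt_shiftₗ_iff {M : Type*} [AddCommMonoid M] {h : M} {c : ℕ} {f : M → G} :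
    IsPeriodicPt (shiftₗ M G h) c f ↔ Function.Periodic f (c • h) := by
  simp only [IsPeriodicPt, Function.IsFixedPt, ← Module.End.pow_apply, funext_iff,
    shiftₗ_pow_apply, Function.Periodic]

theorem finite_setOf_periodic {β : Type*} [Finite β] {c : ℕ} (hc : 0 < c) :
    {f : ℕ → β | Function.Periodic f c}.Finite := by
  refine Set.Finite.of_injOn (f := fun f (i : Fin c) ↦ f i) (Set.mapsTo_univ _ _) ?_ Set.finite_univ
  intro f hf g hg hfg
  funext n
  rw [← hf.map_mod_nat n, ← hg.map_mod_nat n]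
  exact congrFun hfg ⟨n % c, Nat.mod_lt n hc⟩

theorem finite_range_iterate_fwdDiffₗ [Finite G] {f : ℕ → G}
    (hf : f ∈ periodicPts (shiftₗ ℕ G 1)) :
    (Set.range fun n ↦ (fwdDiffₗ ℕ G 1)^[n] f).Finite := by
  obtain ⟨c, hc, hper⟩ := hf
  refine (finite_setOf_periodic (β := G) hc).subset (Set.range_subset_iff.2 fun n ↦ ?_)
  have hcomm : Function.Commute (fwdDiffₗ ℕ G 1) (shiftₗ ℕ G 1) :=
    LinearMap.congr_fun (commute_fwdDiffₗ_shiftₗ 1).eq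
  have hn : IsPeriodicPt (shiftₗ ℕ G 1) c ((fwdDiffₗ ℕ G 1)^[n] f) :=
    hper.map (hcomm.iterate_left n).semiconj
  simpa only [Set.mem_ofPred_eq, isPeriodicPt_shiftₗ_iff, smul_eq_mul, mul_one] using hn

end Shift

theorem stmt1_general {G : Type*} [AddCommGroup G] [Finite G] {f : ℕ → G}
    (hf : f ∈ periodicPts (shiftₗ ℕ G 1)) :
    ∃ fI fN : ℕ → G, fI ∈ periodicPts (shiftₗ ℕ G 1) ∧ fN ∈ periodicPts (shiftₗ ℕ G 1) ∧
      fI ∈ periodicSubmodule (fwdDiffₗ ℕ G 1) ∧ fN ∈ (fwdDiffₗ ℕ G 1).maxGenEigenspace 0 ∧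
      f = fI + fN ∧
      minimalPeriod (shiftₗ ℕ G 1) f =
        (minimalPeriod (shiftₗ ℕ G 1) fI).lcm (minimalPeriod (shiftₗ ℕ G 1) fN) ∧
      ∀ gI gN : ℕ → G, gI ∈ periodicSubmodule (fwdDiffₗ ℕ G 1) →
        gN ∈ (fwdDiffₗ ℕ G 1).maxGenEigenspace 0 → f = gI + gN → gI = fI ∧ gN = fN := by
  have hdisj := disjoint_periodicSubmodule_maxGenEigenspace_zero (fwdDiffₗ ℕ G 1)
  have hcomm := commute_fwdDiffₗ_shiftₗ (G := G) (1 : ℕ)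
  have hmapsI := mapsTo_periodicSubmodule_of_commute hcomm
  have hmapsN := mapsTo_maxGenEigenspace_of_comm hcomm 0
  obtain ⟨fI, hI, fN, hN, rfl⟩ := Submodule.mem_sup.1
    (mem_periodicSubmodule_sup_maxGenEigenspace_zero (finite_range_iterate_fwdDiffₗ hf))
  obtain ⟨c, hc, hper⟩ := hf
  obtain ⟨hperI, hperN⟩ := (isPeriodicPt_add_iff_of_disjoint hdisj hmapsI hmapsN hI hN).1 hper
  exact ⟨fI, fN, ⟨c, hc, hperI⟩, ⟨c, hc, hperN⟩, hI, hN, rfl,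
    minimalPeriod_add_of_disjoint hdisj hmapsI hmapsN hI hN,
    fun gI gN hgI hgN h ↦ (add_eq_add_iff_of_disjoint hdisj hgI hI hgN hN).1 h.symm⟩

section ZMod

variable {m : ℕ} {f : ℕ → ZMod m}

theorem isPeriodicSeq_iff : IsPeriodicSeq f ↔ f ∈ periodicPts (shiftₗ ℕ (ZMod m) 1) := by
  simp only [IsPeriodicSeq, Function.mem_periodicPts, isPeriodicPt_shiftₗ_iff, smul_eq_mul, mul_one,
    Nat.one_le_iff_ne_zero, Nat.pos_iff_ne_zero]

theorem perSeq_eq_minimalPeriod : perSeq f = minimalPeriod (shiftₗ ℕ (ZMod m) 1) f := by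
  simp only [perSeq, Function.minimalPeriod_eq_sInf_n_pos_IsPeriodicPt, isPeriodicPt_shiftₗ_iff,
    smul_eq_mul, mul_one]
  rfl

theorem isIdempotentSeq_iff : IsIdempotentSeq f ↔ f ∈ periodicSubmodule (fwdDiffₗ ℕ (ZMod m) 1) :=
  Iff.rfl

theorem isNilpotentSeq_iff :
    IsNilpotentSeq f ↔ f ∈ (fwdDiffₗ ℕ (ZMod m) 1).maxGenEigenspace 0 := by
  rw [mem_maxGenEigenspace_zero_iff]
  refine ⟨fun ⟨n, _, hn⟩ ↦ ⟨n, hn⟩, fun ⟨n, hn⟩ ↦ ⟨n + 1, n.succ_pos, ?_⟩⟩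
  exact (Function.iterate_succ_apply' (fwdDiffₗ ℕ (ZMod m) 1) n f).trans (by rw [hn, map_zero])

end ZMod

/-- every periodic sequence `f` in `Z_m` decomposes uniquely as
`f = f_I + f_N` with `f_I` idempotent and `f_N` nilpotent, and
`τ(f) = lcm(τ(f_I), τ(f_N))`. -/
theorem stmt1 (m : ℕ) (hm : 2 ≤ m) (f : ℕ → ZMod m) (hf : IsPeriodicSeq f) :
    ∃ fI fN : ℕ → ZMod m,
      IsPeriodicSeq fI ∧ IsPeriodicSeq fN ∧ IsIdempotentSeq fI ∧ IsNilpotentSeq fN ∧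
      f = fI + fN ∧ perSeq f = Nat.lcm (perSeq fI) (perSeq fN) ∧
      ∀ gI gN : ℕ → ZMod m, IsPeriodicSeq gI → IsPeriodicSeq gN →
        IsIdempotentSeq gI → IsNilpotentSeq gN → f = gI + gN → gI = fI ∧ gN = fN := by
  have : NeZero m := ⟨by lia⟩
  simp only [isPeriodicSeq_iff, perSeq_eq_minimalPeriod, isIdempotentSeq_iff,
    isNilpotentSeq_iff] at hf ⊢
  obtain ⟨fI, fN, hPI, hPN, hI, hN, hadd, hper, huniq⟩ := stmt1_general hf
  exact ⟨fI, fN, hPI, hPN, hI, hN, hadd, hper, fun gI gN _ _ ↦ huniq gI gN⟩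
end

section
/- Let p be a prime, ℓ ≥ 1, and let f be a periodic sequence in Z_{p^ℓ}. Then f is nilpotent if and only if τ(f) = p^t for some t ∈ ℕ. -/
/-!
Modulo `p` one has `x ^ p ^ t - 1 ≡ (x - 1) ^ p ^ t`. Hence, in a commutative ring in which
`p ^ l = 0`, `x ^ p ^ t = 1` makes `(x - 1) ^ p ^ t` a multiple of `p`, so `x - 1` is nilpotent.
Conversely, if `(x - 1) ^ n = 0` then `x ^ p ^ n ≡ 1` modulo `p`, and every further `p`-th power
improves the congruence by one power of `p`, until `x ^ p ^ (n + l) = 1`. For the sequence `f` this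
is applied to the class of `X` in `ℤ[X]` modulo the annihilator of `f`, where `X` acts as `θ`.
-/

section CommRing

variable {R V : Type*} [CommRing R] [AddCommGroup V] [Module R V] {p : ℕ}

theorem natCast_dvd_pow_prime_pow_sub_one_iff (hp : p.Prime) (x : R) (t : ℕ) :
    (p : R) ∣ x ^ p ^ t - 1 ↔ (p : R) ∣ (x - 1) ^ p ^ t := by
  obtain ⟨r, hr⟩ := exists_add_pow_prime_pow_eq hp (x - 1) 1 t
  rw [sub_add_cancel, one_pow] at hr
  exact dvd_iff_dvd_of_dvd_sub ⟨(x - 1) * 1 * r, by rw [hr]; ring⟩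

theorem isNilpotent_sub_one_iff_exists_pow_prime_pow_eq_one (hp : p.Prime)
    (hpR : IsNilpotent (p : R)) (x : R) :
    IsNilpotent (x - 1) ↔ ∃ t, x ^ p ^ t = 1 := by
  constructor
  · rintro ⟨n, hn⟩
    obtain ⟨l, hl⟩ := hpR
    have hdvd : (p : R) ∣ x ^ p ^ n - 1 := by
      rw [natCast_dvd_pow_prime_pow_sub_one_iff hp,
        pow_eq_zero_of_le (Nat.lt_pow_self hp.one_lt).le hn]
      exact dvd_zero _
    have hlift := dvd_sub_pow_of_dvd_sub hdvd l
    rw [pow_succ, hl, zero_mul, zero_dvd_iff, one_pow, ← pow_mul, ← pow_add, sub_eq_zero] at hlift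
    exact ⟨n + l, hlift⟩
  · rintro ⟨t, ht⟩
    have hdvd : (p : R) ∣ (x - 1) ^ p ^ t := by
      rw [← natCast_dvd_pow_prime_pow_sub_one_iff hp, ht, sub_self]
      exact dvd_zero _
    exact (IsNilpotent.pow_iff_pos (pow_pos hp.pos t).ne').1 ((nilradical R).mem_of_dvd hdvd hpR)

theorem exists_sub_one_pow_smul_eq_zero_iff_exists_pow_prime_pow_smul_eq (hp : p.Prime) {l : ℕ}
    (x : R) {v : V} (hv : p ^ l • v = 0) :
    (∃ n, (x - 1) ^ n • v = 0) ↔ ∃ t, x ^ p ^ t • v = v := by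
  let I := Ideal.torsionOf R V v
  have hmem (y : R) : Ideal.Quotient.mk I y = 0 ↔ y • v = 0 :=
    Ideal.Quotient.eq_zero_iff_mem.trans (Ideal.mem_torsionOf_iff v y)
  have hpI : IsNilpotent (p : R ⧸ I) := by
    refine ⟨l, ?_⟩
    have hpv : (p ^ l : R) • v = 0 := by
      rw [← Nat.cast_pow, Nat.cast_smul_eq_nsmul, hv]
    simpa only [map_pow, map_natCast] using (hmem _).2 hpv
  have hzero (n : ℕ) : (Ideal.Quotient.mk I x - 1) ^ n = 0 ↔ (x - 1) ^ n • v = 0 := by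
    rw [← hmem, map_pow, map_sub, map_one]
  have hone (t : ℕ) : Ideal.Quotient.mk I x ^ p ^ t = 1 ↔ x ^ p ^ t • v = v := by
    rw [← sub_eq_zero, ← sub_eq_zero (a := _ • v), ← map_pow, ← map_one (Ideal.Quotient.mk I),
      ← map_sub, hmem, sub_smul, one_smul]
  simpa only [IsNilpotent, hzero, hone] using
    isNilpotent_sub_one_iff_exists_pow_prime_pow_eq_one hp hpI (Ideal.Quotient.mk I x)

end CommRing

theorem exists_pow_prime_pow_smul_eq_iff_exists_period_eq {G α : Type*} [Monoid G] [MulAction G α]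
    {p : ℕ} (hp : p.Prime) (g : G) (a : α) :
    (∃ t, g ^ p ^ t • a = a) ↔ ∃ t, MulAction.period g a = p ^ t := by
  simp only [MulAction.pow_smul_eq_iff_period_dvd, Nat.dvd_prime_pow hp]
  exact ⟨fun ⟨_, s, _, hs⟩ ↦ ⟨s, hs⟩, fun ⟨t, ht⟩ ↦ ⟨t, t, le_rfl, ht⟩⟩

open Polynomial Module in
theorem exists_sub_one_pow_smul_eq_zero_iff_exists_period_eq {A V : Type*} [Ring A]
    [AddCommGroup V] [Module A V] {p l : ℕ} (hp : p.Prime) (a : A) {v : V} (hv : p ^ l • v = 0) :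
    (∃ n, (a - 1) ^ n • v = 0) ↔ ∃ t, MulAction.period a v = p ^ t := by
  rw [← exists_pow_prime_pow_smul_eq_iff_exists_period_eq hp]
  have hiff := exists_sub_one_pow_smul_eq_zero_iff_exists_pow_prime_pow_smul_eq hp (X : ℤ[X])
    (v := AEval.of ℤ V a v) (by rw [← map_nsmul, hv, map_zero])
  simpa only [← AEval.of_aeval_smul, map_pow, map_sub, aeval_X, map_one,
    EmbeddingLike.map_eq_zero_iff, EmbeddingLike.apply_eq_iff_eq] using hiff

open fwdDiff_aux in
theorem stmt3_general {M G : Type*} [AddCommMonoid M] [AddCommGroup G] {p l : ℕ} (hp : p.Prime)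
    (h : M) {f : M → G} (hf : p ^ l • f = 0) :
    (∃ η, (fwdDiff h)^[η] f = 0) ↔ ∃ t, Function.minimalPeriod (fun g n ↦ g (n + h)) f = p ^ t := by
  have hΔ : fwdDiffₗ M G h = shiftₗ M G h - 1 := (add_sub_cancel_right _ _).symm
  have hθ : (fun (g : M → G) n ↦ g (n + h)) = (shiftₗ M G h • ·) := by
    ext g n
    exact (shiftₗ_apply h g n).symm
  rw [hθ, ← MulAction.period_eq_minimalPeriod,
    ← exists_sub_one_pow_smul_eq_zero_iff_exists_period_eq hp _ hf, ← hΔ]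
  simp only [Module.End.smul_def, coe_fwdDiffₗ_pow]

section Seq

variable {M : ℕ} (f : ℕ → ZMod M)

theorem isNilpotentSeq_iff_exists_fwdDiff_iter_eq_zero :
    IsNilpotentSeq f ↔ ∃ η, (fwdDiff 1)^[η] f = 0 := by
  refine ⟨fun ⟨η, _, hη⟩ ↦ ⟨η, hη⟩, fun ⟨η, hη⟩ ↦ ⟨η + 1, η.succ_pos, ?_⟩⟩
  change (fwdDiff 1)^[η + 1] f = 0
  rw [Function.iterate_succ_apply', hη]
  exact fwdDiff_const 1 0

theorem shiftSeq_iterate_apply (j n : ℕ) : shiftSeq^[j] f n = f (n + j) := by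
  induction j generalizing n with
  | zero => rfl
  | succ j ih => rw [Function.iterate_succ_apply', shiftSeq, ih, add_right_comm, add_assoc]

theorem isPeriodicPt_shiftSeq_iff (j : ℕ) :
    Function.IsPeriodicPt shiftSeq j f ↔ Function.Periodic f j := by
  simp only [Function.IsPeriodicPt, Function.IsFixedPt, funext_iff, shiftSeq_iterate_apply,
    Function.Periodic]

theorem perSeq_eq_minimalPeriod_s3 : perSeq f = Function.minimalPeriod shiftSeq f := by
  rw [Function.minimalPeriod_eq_sInf_n_pos_IsPeriodicPt]
  simp only [isPeriodicPt_shiftSeq_iff]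
  rfl

end Seq

/-- a periodic sequence in `Z_{p^ℓ}` is nilpotent iff its period is
a power of `p`. -/
theorem stmt3 (p l : ℕ) (hp : p.Prime) (hl : 1 ≤ l)
    (f : ℕ → ZMod (p ^ l)) (hf : IsPeriodicSeq f) :
    IsNilpotentSeq f ↔ ∃ t : ℕ, perSeq f = p ^ t := by
  rw [isNilpotentSeq_iff_exists_fwdDiff_iter_eq_zero, perSeq_eq_minimalPeriod_s3]
  exact stmt3_general hp 1 (ZModModule.char_nsmul_eq_zero (p ^ l) f)
end

section
/- Let p be a prime, ℓ ≥ 1, and let f be a periodic sequence in Z_{p^ℓ}. (1) If f is idempotent, then tr f = 0. (2) If tr f = 0 and p does not divide τ(f), then f is idempotent. -/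
/-!
One period of `Δ g` telescopes, so `Δ` maps the group of `t`-periodic sequences into its subgroup
of sequences with zero sum over a period; an idempotent sequence `f = Δ^η f` therefore lies in that
subgroup. A sequence killed by `Δ` is constant, equal to `c` say, and its sum over a period is
`t • c`; when `t` is coprime to the order of the coefficient group, this vanishes only for `c = 0`.
So `Δ` restricts to an injective self-map of a finite set, and all points of such a map are
periodic.
-/

open Function Finset
open scoped fwdDiff

theorem mem_periodicPts_of_injOn {α : Type*} {φ : α → α} {s : Set α} (hs : s.Finite)
    (hmaps : Set.MapsTo φ s s) (hinj : Set.InjOn φ s) {x : α} (hx : x ∈ s) :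
    x ∈ periodicPts φ := by
  have : Finite s := hs
  have hsemi : Semiconj Subtype.val (hmaps.restrict φ s s) φ := fun _ ↦ rfl
  exact hsemi.mapsTo_periodicPts ((hmaps.restrict_inj.2 hinj).mem_periodicPts ⟨x, hx⟩)

theorem finite_setOf_periodic_s5 {β : Type*} [Finite β] {t : ℕ} (ht : 0 < t) :
    {g : ℕ → β | Periodic g t}.Finite := by
  refine Set.Finite.of_injOn (f := fun g (i : Fin t) ↦ g i) (Set.mapsTo_univ _ _) ?_
    Set.finite_univ
  intro g hg h hh hgh
  funext n
  rw [← hg.map_mod_nat n, ← hh.map_mod_nat n]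
  exact congrFun hgh ⟨n % t, Nat.mod_lt n ht⟩

section fwdDiff

variable {G : Type*} [AddCommGroup G]

theorem periodic_fwdDiff {A : Type*} [AddCommMonoid A] {g : A → G} {c : A} (hg : Periodic g c)
    (h : A) : Periodic (Δ_[h] g) c := fun n ↦ by
  simp only [fwdDiff, add_right_comm n c h, hg _]

theorem sum_range_fwdDiff_of_periodic {g : ℕ → G} {t : ℕ} (hg : Periodic g t) :
    ∑ i ∈ range t, Δ_[1] g i = 0 :=
  (sum_range_sub g t).trans (sub_eq_zero.2 hg.eq)

theorem eq_apply_zero_of_fwdDiff_one_eq_zero {g : ℕ → G} (hg : Δ_[1] g = 0) (n : ℕ) :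
    g n = g 0 := by
  induction n with
  | zero => rfl
  | succ n ih => exact (sub_eq_zero.1 (congrFun hg n)).trans ih

variable (G) in
/-- The group of `t`-periodic sequences whose first `t` terms sum to zero, on which `Δ` is injective
for suitable `t`. A common period `t` is fixed because sequences of a given least period do not
form a group; for a sequence of least period `t` the condition says that its trace vanishes. -/
def periodicZeroSum (t : ℕ) : AddSubgroup (ℕ → G) where
  carrier := {g | Periodic g t ∧ ∑ i ∈ range t, g i = 0}
  zero_mem' := ⟨fun _ ↦ rfl, sum_const_zero⟩
  add_mem' hg hh := ⟨hg.1.add hh.1, by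
    simp only [Pi.add_apply, sum_add_distrib, hg.2, hh.2, add_zero]⟩
  neg_mem' hg := ⟨fun n ↦ congrArg Neg.neg (hg.1 n), by
    simp only [Pi.neg_apply, sum_neg_distrib, hg.2, neg_zero]⟩

theorem fwdDiff_mem_periodicZeroSum {g : ℕ → G} {t : ℕ} (hg : Periodic g t) :
    Δ_[1] g ∈ periodicZeroSum G t :=
  ⟨periodic_fwdDiff hg 1, sum_range_fwdDiff_of_periodic hg⟩

theorem iterate_fwdDiff_mem_periodicZeroSum {g : ℕ → G} {t : ℕ} (hg : Periodic g t) {n : ℕ}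
    (hn : 0 < n) : (Δ_[1])^[n] g ∈ periodicZeroSum G t := by
  induction n, hn using Nat.le_induction with
  | base => exact fwdDiff_mem_periodicZeroSum hg
  | succ n _ ih =>
    rw [iterate_succ_apply']
    exact fwdDiff_mem_periodicZeroSum ih.1

theorem eq_zero_of_fwdDiff_eq_zero_of_mem_periodicZeroSum {g : ℕ → G} {t : ℕ}
    (ht : IsSMulRegular G t) (hg : g ∈ periodicZeroSum G t) (hΔ : Δ_[1] g = 0) : g = 0 := by
  have hconst : ∀ n, g n = g 0 := eq_apply_zero_of_fwdDiff_one_eq_zero hΔ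
  have hsum : t • g 0 = 0 := by
    simpa only [hconst, sum_const, card_range] using hg.2
  funext n
  exact (hconst n).trans (ht (hsum.trans (smul_zero t).symm))

theorem injOn_fwdDiff_periodicZeroSum {t : ℕ} (ht : IsSMulRegular G t) :
    Set.InjOn Δ_[1] (periodicZeroSum G t : Set (ℕ → G)) := by
  intro g hg h hh hgh
  have hsub : Δ_[1] (g - h) = 0 :=
    (map_sub (fwdDiff_aux.fwdDiffₗ ℕ G 1) g h).trans (sub_eq_zero.2 hgh)
  exact sub_eq_zero.1
    (eq_zero_of_fwdDiff_eq_zero_of_mem_periodicZeroSum ht (sub_mem hg hh) hsub)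

theorem mem_periodicPts_fwdDiff_of_mem_periodicZeroSum [Finite G] {g : ℕ → G} {t : ℕ} (ht : 0 < t)
    (hreg : IsSMulRegular G t) (hg : g ∈ periodicZeroSum G t) : g ∈ periodicPts Δ_[1] :=
  mem_periodicPts_of_injOn ((finite_setOf_periodic_s5 ht).subset fun _ h ↦ h.1)
    (fun _ h ↦ fwdDiff_mem_periodicZeroSum h.1) (injOn_fwdDiff_periodicZeroSum hreg) hg

theorem sum_range_eq_zero_of_mem_periodicPts_fwdDiff {g : ℕ → G} {t : ℕ} (hg : Periodic g t)
    (hmem : g ∈ periodicPts Δ_[1]) : ∑ i ∈ range t, g i = 0 := by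
  obtain ⟨n, hn, hfix⟩ := hmem
  rw [← hfix.eq]
  exact (iterate_fwdDiff_mem_periodicZeroSum hg hn).2

theorem stmt5_general [Finite G] {f : ℕ → G} {t : ℕ} (ht : 0 < t) (hf : Periodic f t) :
    (f ∈ periodicPts Δ_[1] → ∑ i ∈ range t, f i = 0) ∧
    (∑ i ∈ range t, f i = 0 → (Nat.card G).Coprime t → f ∈ periodicPts Δ_[1]) := by
  refine ⟨sum_range_eq_zero_of_mem_periodicPts_fwdDiff hf, fun hsum hcop ↦ ?_⟩
  have hreg : IsSMulRegular G t := (nsmulCoprime hcop).injective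
  exact mem_periodicPts_fwdDiff_of_mem_periodicZeroSum ht hreg ⟨hf, hsum⟩

end fwdDiff

section ZMod

variable {M : ℕ} {f : ℕ → ZMod M}

theorem IsPeriodicSeq.perSeq_pos (hf : IsPeriodicSeq f) : 0 < perSeq f :=
  (Nat.sInf_mem hf).1

theorem IsPeriodicSeq.periodic_perSeq (hf : IsPeriodicSeq f) : Periodic f (perSeq f) :=
  (Nat.sInf_mem hf).2

theorem isIdempotentSeq_iff_mem_periodicPts_fwdDiff : IsIdempotentSeq f ↔ f ∈ periodicPts Δ_[1] :=
  Iff.rfl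

end ZMod

/-- (1) an idempotent periodic sequence has zero trace;
(2) a periodic sequence with zero trace whose period is prime to `p` is idempotent. -/
theorem stmt5 (p l : ℕ) (hp : p.Prime) (hl : 1 ≤ l)
    (f : ℕ → ZMod (p ^ l)) (hf : IsPeriodicSeq f) :
    (IsIdempotentSeq f → trSeq f = 0) ∧
    (trSeq f = 0 → ¬ p ∣ perSeq f → IsIdempotentSeq f) := by
  have : NeZero (p ^ l) := ⟨pow_ne_zero l hp.ne_zero⟩
  rw [isIdempotentSeq_iff_mem_periodicPts_fwdDiff]
  exact (stmt5_general hf.perSeq_pos hf.periodic_perSeq).imp_right fun h htr hdvd ↦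
    h htr (by simpa only [Nat.card_zmod] using (hp.coprime_iff_not_dvd.2 hdvd).pow_left l)
end

section
/- Let p be a prime, ℓ ≥ 1, and let f be a nonzero nilpotent periodic sequence in Z_{p^ℓ} of nilpotency index η, with generating vector (e_0, …, e_{η−1}) and leading component e_γ. Let μ be the minimal natural number with η − γ − 1 < p^μ(p−1). Then for every s ≥ p^μ − γ, the period of Σ^s f equals the period of Σ^{s+γ}[e_γ]; in particular τ(Σ^s f) = τ(Σ^{s+γ}[e_γ]) for all sufficiently large s. -/
open Finset Function fwdDiff

/-!
By the Gregory–Newton formula, `g (n + J) - g n` has generating vector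
`m ↦ ∑_{0 < j ≤ J} J.choose j • e_{m+j}`, where `e` is the generating vector of `g`, so `J` is a
period of `g` iff all these sums vanish. For `J = p ^ n` the valuation of `J.choose j` is
`n - ν_p(j)`. Suppose the leading component `e_K` has order `p ^ (r + 1)`, that `p ^ t` is the
largest power of `p` not exceeding `K`, and that `e` vanishes from `K + p ^ t * (p - 1)` on. Then
every term of every sum vanishes for `J = p ^ (r + t + 1)`, whereas for `J = p ^ (r + t)` the sum
at `m = K - p ^ t` reduces to its nonzero term `j = p ^ t`. So the period is `p ^ (r + t + 1)`.
Since `Σ ^ s` moves the leading index from `γ` to `s + γ`, both sequences in question have the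
same leading component at the same index, and hence the same period.
-/

section NewtonExpansion

variable {G : Type*} [AddCommGroup G]

/-- The generating vector `e_k = Δ^k g(0)` of a sequence `g`, that is, the coefficients of its
Newton expansion. It is an infinite sequence here, so that no nilpotency index has to be fixed. -/
def generatingVector (g : ℕ → G) (k : ℕ) : G := (Δ_[1])^[k] g 0

lemma eq_sum_choose_nsmul_generatingVector (g : ℕ → G) (n : ℕ) :
    g n = ∑ k ∈ range (n + 1), n.choose k • generatingVector g k := by
  simpa [generatingVector] using shift_eq_sum_fwdDiff_iter 1 g n 0

lemma generatingVector_zero : generatingVector (0 : ℕ → G) = 0 := by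
  have hfix : IsFixedPt Δ_[1] (0 : ℕ → G) := fwdDiff_const 1 0
  exact funext fun k => congrFun (hfix.iterate k) 0

lemma generatingVector_eq_zero_iff {g : ℕ → G} : generatingVector g = 0 ↔ g = 0 := by
  refine ⟨fun h => funext fun n => ?_, by rintro rfl; exact generatingVector_zero⟩
  simp [eq_sum_choose_nsmul_generatingVector g n, h]

lemma generatingVector_fwdDiff_one (g : ℕ → G) (k : ℕ) :
    generatingVector (Δ_[1] g) k = generatingVector g (k + 1) :=
  rfl

lemma generatingVector_eq_zero_of_le {g : ℕ → G} {η k : ℕ} (hg : (Δ_[1])^[η] g = 0) (hk : η ≤ k) :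
    generatingVector g k = 0 := by
  have h : generatingVector g k = generatingVector ((Δ_[1])^[η] g) (k - η) := by
    rw [generatingVector, generatingVector, ← iterate_add_apply, Nat.sub_add_cancel hk]
  rw [h, hg, generatingVector_zero, Pi.zero_apply]

lemma generatingVector_const_of_pos (c : G) {k : ℕ} (hk : 0 < k) :
    generatingVector (fun _ => c) k = 0 :=
  generatingVector_eq_zero_of_le (η := 1) (fwdDiff_const 1 c) hk

lemma fwdDiff_eq_sum_choose_nsmul (g : ℕ → G) (J : ℕ) :
    Δ_[J] g = ∑ j ∈ range J, J.choose (j + 1) • (Δ_[1])^[j + 1] g := by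
  funext n
  have h := shift_eq_sum_fwdDiff_iter 1 g J n
  rw [sum_range_succ'] at h
  simpa [fwdDiff, sub_eq_iff_eq_add] using h

lemma generatingVector_fwdDiff (g : ℕ → G) (J m : ℕ) :
    generatingVector (Δ_[J] g) m =
      ∑ j ∈ range J, J.choose (j + 1) • generatingVector g (m + (j + 1)) := by
  simp only [generatingVector, fwdDiff_eq_sum_choose_nsmul g J, fwdDiff_iter_finsetSum,
    fwdDiff_iter_const_smul, Finset.sum_apply, Pi.smul_apply, ← iterate_add_apply]

lemma periodic_iff_fwdDiff_eq_zero {g : ℕ → G} {J : ℕ} : Periodic g J ↔ Δ_[J] g = 0 := by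
  simp only [Periodic, funext_iff, fwdDiff, Pi.zero_apply, sub_eq_zero]

lemma periodic_iff_sum_choose_nsmul_eq_zero {g : ℕ → G} {J : ℕ} :
    Periodic g J ↔
      ∀ m, ∑ j ∈ range J, J.choose (j + 1) • generatingVector g (m + (j + 1)) = 0 := by
  simp only [periodic_iff_fwdDiff_eq_zero, ← generatingVector_eq_zero_iff (g := Δ_[J] g),
    funext_iff, generatingVector_fwdDiff, Pi.zero_apply]

end NewtonExpansion

section LeadingIndex

variable {G : Type*} [AddCommGroup G] {p : ℕ}

lemma choose_prime_pow_nsmul_eq_zero (hp : p.Prime) {n a u j : ℕ} {x : G} (hx : p ^ a • x = 0)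
    (hn : a + u ≤ n) (hj : ¬ p ^ (u + 1) ∣ j) : (p ^ n).choose j • x = 0 := by
  rcases lt_or_ge (p ^ n) j with hlt | hle
  · rw [Nat.choose_eq_zero_of_lt hlt, zero_nsmul]
  have hj0 : j ≠ 0 := by rintro rfl; exact hj (dvd_zero _)
  have hdvd : p ^ a ∣ (p ^ n).choose j := by
    rw [hp.pow_dvd_iff_le_factorization hj0] at hj
    rw [hp.pow_dvd_iff_le_factorization (Nat.choose_pos hle).ne',
      Nat.factorization_choose_prime_pow hp hle hj0]
    omega
  exact addOrderOf_dvd_iff_nsmul_eq_zero.1 ((addOrderOf_dvd_of_nsmul_eq_zero hx).trans hdvd)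

lemma choose_prime_pow_nsmul_ne_zero (hp : p.Prime) {r t : ℕ} {x : G}
    (hx : addOrderOf x = p ^ (r + 1)) : (p ^ (r + t)).choose (p ^ t) • x ≠ 0 := by
  have hle : p ^ t ≤ p ^ (r + t) := Nat.pow_le_pow_right hp.pos (Nat.le_add_left t r)
  rw [Ne, ← addOrderOf_dvd_iff_nsmul_eq_zero, hx,
    hp.pow_dvd_iff_le_factorization (Nat.choose_pos hle).ne',
    Nat.factorization_choose_prime_pow hp hle (pow_pos hp.pos t).ne', hp.factorization_pow]
  simp

lemma exists_addOrderOf_eq_prime_pow_succ (hp : p.Prime) {a : ℕ} {x : G} (hx : p ^ a • x = 0)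
    (hx0 : x ≠ 0) : ∃ r, addOrderOf x = p ^ (r + 1) := by
  obtain ⟨b, -, hb⟩ := (Nat.dvd_prime_pow hp).1 (addOrderOf_dvd_of_nsmul_eq_zero hx)
  cases b with
  | zero => exact absurd (AddMonoid.addOrderOf_eq_one_iff.1 hb) hx0
  | succ r => exact ⟨r, hb⟩

/-- `γ` is the index of the leading component of `e`, and this component has order `p ^ (r + 1)`.
In `ℤ/p^ℓ` the elements of smallest valuation are those of largest order, so the notion of leading
component is phrased through annihilation by powers of `p`, which makes sense in every additive
group. -/
structure HasLeadingIndex (p : ℕ) (e : ℕ → G) (γ r : ℕ) : Prop where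
  addOrderOf_eq : addOrderOf (e γ) = p ^ (r + 1)
  nsmul_eq_zero (k : ℕ) : p ^ (r + 1) • e k = 0
  nsmul_eq_zero_of_lt (k : ℕ) (hk : γ < k) : p ^ r • e k = 0

namespace HasLeadingIndex

variable {g : ℕ → G} {K r t : ℕ}

lemma periodic_pow (hp : p.Prime) (hg : HasLeadingIndex p (generatingVector g) K r)
    (hK : K < p ^ (t + 1)) (hvan : ∀ k, p ^ (t + 2) ≤ k → generatingVector g k = 0) :
    Periodic g (p ^ (r + t + 1)) := by
  refine periodic_iff_sum_choose_nsmul_eq_zero.2 fun m => sum_eq_zero fun j _ => ?_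
  rcases le_or_gt (p ^ (t + 2)) (m + (j + 1)) with hlarge | hsmall
  · rw [hvan _ hlarge, nsmul_zero]
  rcases lt_or_ge K (m + (j + 1)) with hlt | hle
  · exact choose_prime_pow_nsmul_eq_zero hp (hg.nsmul_eq_zero_of_lt _ hlt) (u := t + 1)
      (by omega) (Nat.not_dvd_of_pos_of_lt j.succ_pos ((Nat.le_add_left _ m).trans_lt hsmall))
  · exact choose_prime_pow_nsmul_eq_zero hp (hg.nsmul_eq_zero _) (u := t)
      (by omega) (Nat.not_dvd_of_pos_of_lt (by omega) (by omega))

lemma choose_nsmul_eq_zero_of_ne (hp : p.Prime) (hg : HasLeadingIndex p (generatingVector g) K r)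
    (hK : p ^ t ≤ K) (hvan : ∀ k, K + p ^ t * (p - 1) ≤ k → generatingVector g k = 0) {j : ℕ}
    (hj : 0 < j) (hne : j ≠ p ^ t) :
    (p ^ (r + t)).choose j • generatingVector g (K - p ^ t + j) = 0 := by
  rcases hne.lt_or_gt with hlt | hgt
  · cases t with
    | zero => exact absurd hlt (by simpa using hj.ne')
    | succ u =>
      exact choose_prime_pow_nsmul_eq_zero hp (hg.nsmul_eq_zero _) (u := u) (by omega)
        (Nat.not_dvd_of_pos_of_lt hj hlt)
  by_cases hdvd : p ^ (t + 1) ∣ j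
  · have hle : p ^ t + p ^ t * (p - 1) ≤ j := by
      rw [add_comm, ← Nat.mul_succ, Nat.succ_eq_add_one, Nat.sub_add_cancel hp.one_le, ← pow_succ]
      exact Nat.le_of_dvd hj hdvd
    rw [hvan _ (by omega), nsmul_zero]
  · exact choose_prime_pow_nsmul_eq_zero hp (hg.nsmul_eq_zero_of_lt _ (by omega)) le_rfl hdvd

lemma not_periodic_pow (hp : p.Prime) (hg : HasLeadingIndex p (generatingVector g) K r)
    (hK : p ^ t ≤ K) (hvan : ∀ k, K + p ^ t * (p - 1) ≤ k → generatingVector g k = 0) :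
    ¬ Periodic g (p ^ (r + t)) := by
  intro hper
  have hpos : 0 < p ^ t := pow_pos hp.pos t
  have hle : p ^ t ≤ p ^ (r + t) := Nat.pow_le_pow_right hp.pos (Nat.le_add_left t r)
  have hsum := periodic_iff_sum_choose_nsmul_eq_zero.1 hper (K - p ^ t)
  rw [sum_eq_single_of_mem (p ^ t - 1) (mem_range.2 (by omega)) fun j _ hj =>
    hg.choose_nsmul_eq_zero_of_ne hp hK hvan j.succ_pos (by omega),
    Nat.succ_eq_add_one, Nat.sub_add_cancel hpos, Nat.sub_add_cancel hK] at hsum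
  exact choose_prime_pow_nsmul_ne_zero hp hg.addOrderOf_eq hsum

lemma const {c : G} (hc : addOrderOf c = p ^ (r + 1)) :
    HasLeadingIndex p (generatingVector fun _ => c) 0 r where
  addOrderOf_eq := hc
  nsmul_eq_zero k := by
    rcases k.eq_zero_or_pos with rfl | hk
    · exact addOrderOf_dvd_iff_nsmul_eq_zero.1 hc.dvd
    · rw [generatingVector_const_of_pos c hk, nsmul_zero]
  nsmul_eq_zero_of_lt k hk := by rw [generatingVector_const_of_pos c hk, nsmul_zero]

end HasLeadingIndex

end LeadingIndex

section Period

variable {M : ℕ}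

lemma isPeriodicPt_shiftSeq_iff_s11 {g : ℕ → ZMod M} {j : ℕ} :
    IsPeriodicPt shiftSeq j g ↔ Periodic g j := by
  have hiter : shiftSeq^[j] g = fun n => g (n + j) := by
    induction j with
    | zero => rfl
    | succ j ih =>
      rw [iterate_succ_apply', ih]
      funext n
      simp only [shiftSeq, add_assoc, add_comm 1]
  rw [IsPeriodicPt, IsFixedPt, hiter, funext_iff, Periodic]

lemma perSeq_eq_minimalPeriod_s11 (g : ℕ → ZMod M) : perSeq g = minimalPeriod shiftSeq g := by
  simp only [perSeq, ← isPeriodicPt_shiftSeq_iff_s11]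
  rcases Set.eq_empty_or_nonempty {j | 1 ≤ j ∧ IsPeriodicPt shiftSeq j g} with hempty | hne
  · have hg : g ∉ periodicPts shiftSeq := fun ⟨j, hj⟩ => hempty.subset hj
    rw [hempty, Nat.sInf_empty, minimalPeriod_eq_zero_of_notMem_periodicPts hg]
  · have hmem := Nat.sInf_mem hne
    refine le_antisymm (Nat.sInf_le ?_) (hmem.2.minimalPeriod_le hmem.1)
    exact ⟨hmem.2.minimalPeriod_pos hmem.1, isPeriodicPt_minimalPeriod _ _⟩

lemma perSeq_eq_prime_pow {p : ℕ} (hp : p.Prime) {g : ℕ → ZMod M} {n : ℕ}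
    (hnot : ¬ Periodic g (p ^ n)) (hper : Periodic g (p ^ (n + 1))) : perSeq g = p ^ (n + 1) := by
  have : Fact p.Prime := ⟨hp⟩
  rw [perSeq_eq_minimalPeriod_s11]
  exact minimalPeriod_eq_prime_pow (isPeriodicPt_shiftSeq_iff_s11.not.2 hnot)
    (isPeriodicPt_shiftSeq_iff_s11.2 hper)

end Period

section IteratedSum

variable {M : ℕ}

lemma fwdDiff_sigmaSeq (f : ℕ → ZMod M) : Δ_[1] (sigmaSeq f) = f := by
  funext n
  simp [fwdDiff, sigmaSeq]

lemma generatingVector_iterate_sigmaSeq_of_lt (f : ℕ → ZMod M) {s k : ℕ} (hk : k < s) :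
    generatingVector (sigmaSeq^[s] f) k = 0 := by
  induction k generalizing s with
  | zero =>
    obtain ⟨s, rfl⟩ := Nat.exists_eq_add_one.2 hk
    rw [iterate_succ_apply']
    rfl
  | succ k ih =>
    obtain ⟨s, rfl⟩ := Nat.exists_eq_add_one.2 (k.succ_pos.trans hk)
    rw [← generatingVector_fwdDiff_one, iterate_succ_apply', fwdDiff_sigmaSeq]
    exact ih (Nat.lt_of_succ_lt_succ hk)

lemma generatingVector_iterate_sigmaSeq_add (f : ℕ → ZMod M) (s k : ℕ) :
    generatingVector (sigmaSeq^[s] f) (s + k) = generatingVector f k := by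
  have hinv : LeftInverse (Δ_[1])^[s] (sigmaSeq^[s] : (ℕ → ZMod M) → ℕ → ZMod M) :=
    LeftInverse.iterate fwdDiff_sigmaSeq s
  rw [generatingVector, add_comm, iterate_add_apply, hinv f, generatingVector]

variable {p : ℕ} {f : ℕ → ZMod M} {γ r : ℕ}

lemma HasLeadingIndex.iterate_sigmaSeq (hf : HasLeadingIndex p (generatingVector f) γ r) (s : ℕ) :
    HasLeadingIndex p (generatingVector (sigmaSeq^[s] f)) (s + γ) r where
  addOrderOf_eq := by rw [generatingVector_iterate_sigmaSeq_add, hf.addOrderOf_eq]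
  nsmul_eq_zero k := by
    rcases lt_or_ge k s with hk | hk
    · rw [generatingVector_iterate_sigmaSeq_of_lt f hk, nsmul_zero]
    · obtain ⟨k, rfl⟩ := Nat.exists_eq_add_of_le hk
      rw [generatingVector_iterate_sigmaSeq_add, hf.nsmul_eq_zero]
  nsmul_eq_zero_of_lt k hk := by
    obtain ⟨k, rfl⟩ := Nat.exists_eq_add_of_le ((Nat.le_add_right s γ).trans hk.le)
    rw [generatingVector_iterate_sigmaSeq_add]
    exact hf.nsmul_eq_zero_of_lt k (Nat.lt_of_add_lt_add_left hk)

lemma HasLeadingIndex.perSeq_iterate_sigmaSeq (hp : p.Prime)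
    (hf : HasLeadingIndex p (generatingVector f) γ r) {s t : ℕ} (hts : p ^ t ≤ s + γ)
    (hst : s + γ < p ^ (t + 1))
    (hvan : ∀ k, γ + p ^ t * (p - 1) ≤ k → generatingVector f k = 0) :
    perSeq (sigmaSeq^[s] f) = p ^ (r + t + 1) := by
  have hvan' (k : ℕ) (hk : s + γ + p ^ t * (p - 1) ≤ k) :
      generatingVector (sigmaSeq^[s] f) k = 0 := by
    obtain ⟨k, rfl⟩ := Nat.exists_eq_add_of_le (show s ≤ k by omega)
    rw [generatingVector_iterate_sigmaSeq_add, hvan k (by omega)]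
  have hbound : s + γ + p ^ t * (p - 1) ≤ p ^ (t + 2) := by
    have h₁ : p ^ t * (p - 1) ≤ p ^ (t + 1) := Nat.mul_le_mul_left _ (Nat.sub_le p 1)
    have h₂ : p ^ (t + 1) * 2 ≤ p ^ (t + 2) := Nat.mul_le_mul_left _ hp.two_le
    omega
  have hlead := hf.iterate_sigmaSeq s
  exact perSeq_eq_prime_pow hp (hlead.not_periodic_pow hp hts hvan')
    (hlead.periodic_pow hp hst fun k hk => hvan' k (hbound.trans hk))

end IteratedSum

section Valuation

variable {p l : ℕ}

lemma nuVal_zero {M : ℕ} : nuVal p (0 : ZMod M) = ⊤ := if_pos rfl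

lemma nuVal_lt_top_iff {M : ℕ} {x : ZMod M} : nuVal p x < ⊤ ↔ x ≠ 0 := by
  by_cases hx : x = 0 <;> simp [nuVal, hx]

lemma pow_nsmul_eq_zero_iff_le_add_nuVal (hp : p.Prime) (a : ℕ) (x : ZMod (p ^ l)) :
    p ^ a • x = 0 ↔ (l : ℕ∞) ≤ a + nuVal p x := by
  have : Fact p.Prime := ⟨hp⟩
  by_cases hx : x = 0
  · simp [hx, nuVal_zero]
  have hval : x.val ≠ 0 := (ZMod.val_ne_zero x).2 hx
  have hpa : p ^ a ≠ 0 := pow_ne_zero a hp.ne_zero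
  calc p ^ a • x = 0 ↔ ((p ^ a * x.val : ℕ) : ZMod (p ^ l)) = 0 := by
        rw [nsmul_eq_mul, Nat.cast_mul, ZMod.natCast_zmod_val]
    _ ↔ l ≤ a + padicValNat p x.val := by
        rw [ZMod.natCast_eq_zero_iff, padicValNat_dvd_iff_le (mul_ne_zero hpa hval),
          padicValNat.mul hpa hval, padicValNat.prime_pow]
    _ ↔ (l : ℕ∞) ≤ a + nuVal p x := by
        rw [nuVal, if_neg hx]
        norm_cast

lemma exists_hasLeadingIndex (hp : p.Prime) {e : ℕ → ZMod (p ^ l)} (he : e ≠ 0) {γ η : ℕ}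
    (hvan : ∀ i, η ≤ i → e i = 0) (hle : ∀ i < η, nuVal p (e γ) ≤ nuVal p (e i))
    (hlt : ∀ i, γ < i → i < η → nuVal p (e γ) < nuVal p (e i)) :
    ∃ r, HasLeadingIndex p e γ r := by
  have hle' (i : ℕ) : nuVal p (e γ) ≤ nuVal p (e i) := by
    rcases lt_or_ge i η with hi | hi
    · exact hle i hi
    · simp [hvan i hi, nuVal_zero]
  have hγ : e γ ≠ 0 := by
    obtain ⟨i, hi⟩ := Function.ne_iff.1 he
    exact nuVal_lt_top_iff.1 ((hle' i).trans_lt (nuVal_lt_top_iff.2 hi))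
  have hlt' (i : ℕ) (hi : γ < i) : nuVal p (e γ) + 1 ≤ nuVal p (e i) := by
    rcases lt_or_ge i η with hiη | hiη
    · exact Order.add_one_le_of_lt (hlt i hi hiη)
    · simp [hvan i hiη, nuVal_zero]
  have htors : p ^ l • e γ = 0 := (pow_nsmul_eq_zero_iff_le_add_nuVal hp _ _).2 le_self_add
  obtain ⟨r, hr⟩ := exists_addOrderOf_eq_prime_pow_succ hp htors hγ
  have hrγ : (l : ℕ∞) ≤ (r + 1 : ℕ) + nuVal p (e γ) :=
    (pow_nsmul_eq_zero_iff_le_add_nuVal hp _ _).1 (addOrderOf_dvd_iff_nsmul_eq_zero.1 hr.dvd)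
  refine ⟨r, hr, fun i => ?_, fun i hi => ?_⟩
  · exact (pow_nsmul_eq_zero_iff_le_add_nuVal hp _ _).2 (hrγ.trans (by gcongr; exact hle' i))
  · refine (pow_nsmul_eq_zero_iff_le_add_nuVal hp _ _).2 (hrγ.trans ?_)
    calc ((r + 1 : ℕ) : ℕ∞) + nuVal p (e γ) = r + (nuVal p (e γ) + 1) := by push_cast; ring
      _ ≤ r + nuVal p (e i) := by gcongr; exact hlt' i hi

end Valuation

/-- for a nonzero nilpotent sequence with leading component `e_γ`, for all
`s ≥ p^μ - γ` (with `μ` minimal such that `η - γ - 1 < p^μ(p-1)`) the period of `Σ^s f`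
equals the period of `Σ^{s+γ}[e_γ]`. -/
theorem stmt11 (p l : ℕ) (hp : p.Prime) (hl : 1 ≤ l)
    (f : ℕ → ZMod (p ^ l)) (hf : IsPeriodicSeq f) (hf0 : f ≠ 0)
    (η : ℕ) (hη : 1 ≤ η) (hnil : deltaSeq^[η] f = 0)
    (hmin : ∀ k, 1 ≤ k → deltaSeq^[k] f = 0 → η ≤ k)
    (γ : ℕ) (hγη : γ < η)
    (hlead₁ : ∀ i < η, nuVal p (deltaSeq^[γ] f 0) ≤ nuVal p (deltaSeq^[i] f 0))
    (hlead₂ : ∀ i, γ < i → i < η → nuVal p (deltaSeq^[γ] f 0) < nuVal p (deltaSeq^[i] f 0))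
    (μ : ℕ) (hμ : η - γ - 1 < p ^ μ * (p - 1))
    (hμmin : ∀ ν < μ, ¬ (η - γ - 1 < p ^ ν * (p - 1))) :
    ∀ s : ℕ, p ^ μ - γ ≤ s →
      perSeq (sigmaSeq^[s] f) = perSeq (sigmaSeq^[s + γ] (fun _ => deltaSeq^[γ] f 0)) := by
  intro s hs
  have hvan (k : ℕ) (hk : η ≤ k) : generatingVector f k = 0 :=
    generatingVector_eq_zero_of_le hnil hk
  obtain ⟨r, hlead⟩ : ∃ r, HasLeadingIndex p (generatingVector f) γ r :=
    exists_hasLeadingIndex hp (generatingVector_eq_zero_iff.not.2 hf0) hvan hlead₁ hlead₂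
  have hμs : p ^ μ ≤ s + γ := by omega
  have hK : s + γ ≠ 0 := ((pow_pos hp.pos μ).trans_le hμs).ne'
  set t := Nat.log p (s + γ)
  have hts : p ^ t ≤ s + γ := Nat.pow_log_le_self p hK
  have hst : s + γ < p ^ (t + 1) := Nat.lt_pow_succ_log_self hp.one_lt _
  have hμt : μ ≤ t := Nat.le_log_of_pow_le hp.one_lt hμs
  have hηt : η - γ - 1 < p ^ t * (p - 1) :=
    hμ.trans_le (Nat.mul_le_mul_right _ (Nat.pow_le_pow_right hp.pos hμt))
  calc perSeq (sigmaSeq^[s] f) = p ^ (r + t + 1) :=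
        hlead.perSeq_iterate_sigmaSeq hp hts hst fun k hk => hvan k (by omega)
    _ = perSeq (sigmaSeq^[s + γ] fun _ => deltaSeq^[γ] f 0) :=
        ((HasLeadingIndex.const hlead.addOrderOf_eq).perSeq_iterate_sigmaSeq hp hts hst
          fun k hk => generatingVector_const_of_pos _ (by omega)).symm
end
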